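/- arXiv:1410.5115 — 3 statements merged into one kernel-verified Lean document; each statement's English description precedes it below -/
import Mathlib

section
/- Let real numbers A_{i,jk}^ℓ (1 ≤ i, j, k, ℓ ≤ n) satisfy A_{i,jk}^ℓ = A_{i,kj}^ℓ together with: (i) A_{i,jk}^ℓ = A_{σ(i),σ(j)σ(k)}^{σ(ℓ)} for every transposition σ of {1, …, n}; (ii) Σ_{i=1}^{n} A_{i,ir}^ℓ = (1/2)·δ_{ℓr} for all ℓ, r; (iii) A_{a,qc}^ℓ·δ_{pb} + A_{a,qb}^ℓ·δ_{pc} − A_{p,bc}^ℓ·δ_{qa} − A_{a,pc}^ℓ·δ_{qb} − A_{a,pb}^ℓ·δ_{qc} + A_{q,bc}^ℓ·δ_{pa} − A_{a,bc}^p·δ_{ℓq} + A_{a,bc}^q·δ_{ℓp} = 0 for all a, b, c, p, q, ℓ. Then there exists t ∈ ℝ such that for all i, j, k, ℓ: A_{i,jk}^ℓ = t·(δ_{ij}·δ_{ℓk} + δ_{ik}·δ_{ℓj})/(2(n+1)) + (1 − t)·δ_{iℓ}·δ_{jk}/2. -/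
/-- The Kronecker delta. -/
def kron {n : ℕ} (a b : Fin n) : ℝ := if a = b then 1 else 0

/-!
Differentiating covariance along the rotations of a coordinate plane says that the tensor is killed
by the rotation Lie algebra; together with the transpositions, which are reflections, this is
invariance under the full orthogonal group. Evaluated on well-chosen basis tuples, these relations
kill every component in which some index value occurs exactly once, and express the components
`T i i i i` through the components with two paired indices. The latter take only three values, as
permutations act 2-transitively on indices, so `T` is a combination of the three products of two
Kronecker deltas. Symmetry in `j, k` lets two of the coefficients be taken equal, and the trace
condition gives the one remaining affine relation.
-/

section KroneckerDelta

variable {ι R : Type*} [DecidableEq ι] [Zero R] [One R]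

/-- The Kronecker delta, generalizing `kron` to an arbitrary index type and to values in `R`. -/
def delta (i j : ι) : R := if i = j then 1 else 0

@[simp]
lemma delta_self (i : ι) : delta i i = (1 : R) := if_pos rfl

@[simp]
lemma delta_of_ne {i j : ι} (h : i ≠ j) : delta i j = (0 : R) := if_neg h

lemma delta_comm (i j : ι) : delta i j = (delta j i : R) := by
  simp only [delta, eq_comm]

end KroneckerDelta

section IsotropicTensor

variable {ι R : Type*} [DecidableEq ι]

/-- A rank-four tensor, given by its components, is isotropic if it is invariant under coordinate
permutations and annihilated by the infinitesimal rotation of every coordinate plane `(p, q)`. This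
is the algebraic form of invariance under the orthogonal group. -/
structure IsIsotropicTensor [CommRing R] (T : ι → ι → ι → ι → R) : Prop where
  perm (σ : Equiv.Perm ι) (i j k l : ι) : T (σ i) (σ j) (σ k) (σ l) = T i j k l
  rotation (p q i j k l : ι) :
    delta p i * T q j k l + delta p j * T i q k l + delta p k * T i j q l + delta p l * T i j k q =
      delta q i * T p j k l + delta q j * T i p k l + delta q k * T i j p l + delta q l * T i j k p

namespace IsIsotropicTensor

section Slots

variable [CommRing R] {T : ι → ι → ι → ι → R}

lemma comm₁₂ (hT : IsIsotropicTensor T) : IsIsotropicTensor fun i j k l => T j i k l where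
  perm σ i j k l := hT.perm σ j i k l
  rotation p q i j k l := by linear_combination hT.rotation p q j i k l

lemma comm₂₃ (hT : IsIsotropicTensor T) : IsIsotropicTensor fun i j k l => T i k j l where
  perm σ i j k l := hT.perm σ i k j l
  rotation p q i j k l := by linear_combination hT.rotation p q i k j l

lemma comm₃₄ (hT : IsIsotropicTensor T) : IsIsotropicTensor fun i j k l => T i j l k where
  perm σ i j k l := hT.perm σ i j l k
  rotation p q i j k l := by linear_combination hT.rotation p q i j l k

lemma apply_swap (hT : IsIsotropicTensor T) (p q : ι) :
    T q q q p = T p p p q ∧ T q q p q = T p p q p ∧ T q p p q = T p q q p := by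
  have h := hT.perm (Equiv.swap p q)
  exact ⟨by simpa using h p p p q, by simpa using h p p q p, by simpa using h p q q p⟩

lemma apply_diag (hT : IsIsotropicTensor T) {p q : ι} (hpq : p ≠ q) :
    T p p p p = T p p q q + T p q p q + T p q q p := by
  have rot := hT.rotation p q p p p q
  simp only [delta_self, delta_of_ne hpq, delta_of_ne hpq.symm] at rot
  linear_combination -rot + (hT.apply_swap p q).2.2

lemma exists_apply_pair [Nontrivial ι] (hT : IsIsotropicTensor T) :
    ∃ α β γ : R, ∀ p q, p ≠ q → T p p q q = α ∧ T p q p q = β ∧ T p q q p = γ := by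
  obtain ⟨u, v, huv⟩ := exists_pair_ne ι
  refine ⟨T u u v v, T u v u v, T u v v u, fun p q hpq => ?_⟩
  obtain ⟨σ, rfl, rfl⟩ := MulAction.is_two_pretransitive_iff.mp
    (Equiv.Perm.isMultiplyPretransitive ι 2) huv hpq
  exact ⟨hT.perm σ u u v v, hT.perm σ u v u v, hT.perm σ u v v u⟩

end Slots

section Vanishing

variable [CommRing R] [NoZeroDivisors R] [NeZero (2 : R)] {T : ι → ι → ι → ι → R}

/- With `x₁`, `x₂`, `x₃` the components having `i` in the first, second and third slot, the
hypothesis gives `x₁ + x₂ = x₁ + x₃ = x₂ + x₃ = 0`. -/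
lemma apply_eq_zero_of_antisymm {i j l : ι}
    (h : ∀ S : ι → ι → ι → ι → R, IsIsotropicTensor S → S i j j l + S j i j l = 0)
    (hT : IsIsotropicTensor T) : T i j j l = 0 := by
  have h₁₂ : T i j j l + T j i j l = 0 := h T hT
  have h₁₃ : T i j j l + T j j i l = 0 := h _ hT.comm₂₃
  have h₂₃ : T j i j l + T j j i l = 0 := h _ hT.comm₁₂.comm₂₃
  exact (mul_eq_zero_iff_left (two_ne_zero' R)).mp (by linear_combination h₁₂ + h₁₃ - h₂₃)

lemma apply_eq_zero_of_triple (hT : IsIsotropicTensor T) {i j : ι} (hij : i ≠ j) :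
    T i j j j = 0 := by
  refine apply_eq_zero_of_antisymm (fun S hS => ?_) hT
  have rot_pairs := hS.rotation i j i i j j
  have rot_diag := hS.rotation i j j j j j
  simp only [delta_self, delta_of_ne hij, delta_of_ne hij.symm] at rot_pairs rot_diag
  obtain ⟨swap₄, swap₃, -⟩ := hS.apply_swap i j
  exact (mul_eq_zero_iff_left (two_ne_zero' R)).mp
    (by linear_combination rot_pairs - rot_diag - swap₄ - swap₃)

lemma apply_eq_zero_of_double (hT : IsIsotropicTensor T) {i j l : ι} (hij : i ≠ j) (hil : i ≠ l) :
    T i j j l = 0 := by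
  rcases eq_or_ne j l with rfl | hjl
  · exact hT.apply_eq_zero_of_triple hij
  · refine apply_eq_zero_of_antisymm (fun S hS => ?_) hT
    have triple : S i i i l = 0 :=
      hS.comm₃₄.comm₂₃.comm₁₂.apply_eq_zero_of_triple hil.symm
    have rot := hS.rotation i j i i j l
    simp only [delta_self, delta_of_ne hij, delta_of_ne hij.symm, delta_of_ne hil,
      delta_of_ne hjl] at rot
    linear_combination rot + triple

lemma apply_eq_zero_of_two_isolated (hT : IsIsotropicTensor T) {i j k l : ι} (hij : i ≠ j)
    (hik : i ≠ k) (hil : i ≠ l) (hjk : j ≠ k) (hjl : j ≠ l) : T i j k l = 0 := by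
  have rot := hT.rotation i j j j k l
  have swap := hT.perm (Equiv.swap i j) i j k l
  simp only [delta_self, delta_of_ne hij, delta_of_ne hik, delta_of_ne hil, delta_of_ne hjk,
    delta_of_ne hjl] at rot
  simp only [Equiv.swap_apply_left, Equiv.swap_apply_right,
    Equiv.swap_apply_of_ne_of_ne hik.symm hjk.symm,
    Equiv.swap_apply_of_ne_of_ne hil.symm hjl.symm] at swap
  exact (mul_eq_zero_iff_left (two_ne_zero' R)).mp (by linear_combination -rot - swap)

lemma apply_eq_zero_of_isolated (hT : IsIsotropicTensor T) {i j k l : ι} (hij : i ≠ j)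
    (hik : i ≠ k) (hil : i ≠ l) : T i j k l = 0 := by
  rcases eq_or_ne j k with rfl | hjk
  · exact hT.apply_eq_zero_of_double hij hil
  rcases eq_or_ne j l with rfl | hjl
  · exact hT.comm₃₄.apply_eq_zero_of_double hij hik
  exact hT.apply_eq_zero_of_two_isolated hij hik hil hjk hjl

lemma apply_self_eq_zero_of_ne (hT : IsIsotropicTensor T) (i : ι) {k l : ι} (hkl : k ≠ l) :
    T i i k l = 0 := by
  rcases eq_or_ne k i with rfl | hki
  · exact hT.comm₃₄.comm₂₃.comm₁₂.apply_eq_zero_of_isolated hkl.symm hkl.symm hkl.symm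
  · exact hT.comm₂₃.comm₁₂.apply_eq_zero_of_isolated hki hki hkl

theorem exists_eq_delta (hT : IsIsotropicTensor T) :
    ∃ α β γ : R, ∀ i j k l, T i j k l =
      α * (delta i j * delta k l) + β * (delta i k * delta j l) + γ * (delta i l * delta j k) := by
  rcases subsingleton_or_nontrivial ι with _ | _
  · rcases isEmpty_or_nonempty ι with _ | ⟨⟨u⟩⟩
    · exact ⟨0, 0, 0, isEmptyElim⟩
    · refine ⟨T u u u u, 0, 0, fun i j k l => ?_⟩
      simp [Subsingleton.elim i u, Subsingleton.elim j u, Subsingleton.elim k u,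
        Subsingleton.elim l u]
  obtain ⟨α, β, γ, pair⟩ := hT.exists_apply_pair
  refine ⟨α, β, γ, fun i j k l => ?_⟩
  rcases eq_or_ne i j with rfl | hij
  · rcases eq_or_ne k l with rfl | hkl
    · rcases eq_or_ne i k with rfl | hik
      · obtain ⟨q, hq⟩ := exists_ne i
        obtain ⟨hα, hβ, hγ⟩ := pair i q hq.symm
        simp [hT.apply_diag hq.symm, hα, hβ, hγ]
      · simp [(pair i k hik).1, hik]
    · have not_both : delta i k * delta i l = (0 : R) := by
        rcases eq_or_ne i k with rfl | hik <;> simp [*]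
      simp [hT.apply_self_eq_zero_of_ne i hkl, hkl, not_both, mul_comm (delta i l)]
  rcases eq_or_ne i k with rfl | hik
  · rcases eq_or_ne j l with rfl | hjl
    · simp [(pair i j hij).2.1, hij, hij.symm]
    · simp [hT.comm₂₃.apply_self_eq_zero_of_ne i hjl, hij, hij.symm, hjl]
  rcases eq_or_ne i l with rfl | hil
  · rcases eq_or_ne j k with rfl | hjk
    · simp [(pair i j hij).2.2, hij]
    · simp [hT.comm₃₄.comm₂₃.apply_self_eq_zero_of_ne i hjk, hij, hik, hjk]
  simp [hT.apply_eq_zero_of_isolated hij hik hil, hij, hik, hil]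

end Vanishing

section Symmetric

variable {K : Type*} [Field K] [NeZero (2 : K)] {T : ι → ι → ι → ι → K}

theorem exists_eq_delta_of_symm (hT : IsIsotropicTensor T)
    (hsymm : ∀ i j k l, T i j k l = T i j l k) :
    ∃ α β : K, ∀ i j k l, T i j k l =
      α * (delta i j * delta k l) + β * (delta i k * delta j l + delta i l * delta j k) := by
  obtain ⟨α, β, γ, hT_eq⟩ := hT.exists_eq_delta
  refine ⟨α, (β + γ) / 2, fun i j k l => ?_⟩
  have average : T i j k l = (T i j k l + T i j l k) / 2 := by
    rw [← hsymm i j k l, add_self_div_two]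
  rw [average, hT_eq, hT_eq, delta_comm l k]
  field_simp
  ring

end Symmetric

lemma of_isSwap [CommRing R] [Finite ι] {T : ι → ι → ι → ι → R}
    (hswap : ∀ σ : Equiv.Perm ι, σ.IsSwap → ∀ i j k l, T i j k l = T (σ i) (σ j) (σ k) (σ l))
    (hrot : ∀ p q i j k l,
      delta p i * T q j k l + delta p j * T i q k l + delta p k * T i j q l
          + delta p l * T i j k q =
        delta q i * T p j k l + delta q j * T i p k l + delta q k * T i j p l
          + delta q l * T i j k p) :
    IsIsotropicTensor T where
  perm σ := by
    induction σ using Equiv.Perm.swap_induction_on with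
    | one => exact fun _ _ _ _ => rfl
    | swap_mul σ x y hxy ih =>
      intro i j k l
      rw [← ih i j k l, hswap (Equiv.swap x y) ⟨x, y, hxy, rfl⟩ (σ i) (σ j) (σ k) (σ l)]
      rfl
  rotation := hrot

end IsIsotropicTensor

lemma trace_delta_combination [CommRing R] [Fintype ι] (α β : R) (ℓ : ι) :
    ∑ i, (α * (delta ℓ i * delta i ℓ) + β * (delta ℓ i * delta i ℓ + delta ℓ ℓ * delta i i)) =
      α + β * (Fintype.card ι + 1) := by
  have trace_sq : ∑ i, delta ℓ i * delta i ℓ = (1 : R) := by simp [delta]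
  have trace_one : ∑ _i : ι, (1 : R) = Fintype.card ι := by simp
  simp only [delta_self, one_mul, Finset.sum_add_distrib, ← Finset.mul_sum, trace_sq, trace_one]
  ring

theorem coeff_tensor_classification_general {K : Type*} [Field K] [NeZero (2 : K)] [Fintype ι]
    (hcard : (Fintype.card ι + 1 : K) ≠ 0) (A : ι → ι → ι → ι → K)
    (hA : ∀ ℓ i j k, A ℓ i j k = A ℓ i k j)
    (h1 : ∀ σ : Equiv.Perm ι, σ.IsSwap → ∀ ℓ i j k, A ℓ i j k = A (σ ℓ) (σ i) (σ j) (σ k))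
    (h2 : ∀ ℓ r, ∑ i, A ℓ i i r = (1 / 2) * delta ℓ r)
    (h3 : ∀ a b c p q ℓ,
      A ℓ a q c * delta p b + A ℓ a q b * delta p c - A ℓ p b c * delta q a
        - A ℓ a p c * delta q b - A ℓ a p b * delta q c + A ℓ q b c * delta p a
        - A p a b c * delta ℓ q + A q a b c * delta ℓ p = 0) :
    ∃ t : K, ∀ ℓ i j k,
      A ℓ i j k =
        t * (delta i j * delta ℓ k + delta i k * delta ℓ j) / (2 * ((Fintype.card ι : K) + 1))
          + (1 - t) * (delta i ℓ * delta j k) / 2 := by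
  rcases isEmpty_or_nonempty ι with _ | ⟨⟨m⟩⟩
  · exact ⟨0, isEmptyElim⟩
  have isotropic : IsIsotropicTensor A := .of_isSwap h1 fun p q ℓ a b c => by
    rw [delta_comm p ℓ, delta_comm q ℓ, hA ℓ a b q, hA ℓ a b p]
    linear_combination h3 a b c p q ℓ
  obtain ⟨α, β, hαβ⟩ := isotropic.exists_eq_delta_of_symm hA
  have trace : α + β * (Fintype.card ι + 1) = 1 / 2 := by
    simpa only [hαβ, ← trace_delta_combination α β m, delta_self, mul_one] using h2 m m
  refine ⟨2 * (Fintype.card ι + 1) * β, fun ℓ i j k => ?_⟩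
  rw [hαβ, eq_sub_of_add_eq trace, delta_comm i ℓ]
  field_simp
  ring

end IsotropicTensor

/-- Any solution of the linear system expressing symmetry, transposition, translation and
rotation covariance is an affine combination of the coefficient tensors of the center of mass
and of the circumcenter of mass. -/
theorem coeff_tensor_classification (n : ℕ) (hn : 1 ≤ n)
    (A : Fin n → Fin n → Fin n → Fin n → ℝ)
    (hA : ∀ ℓ i j k, A ℓ i j k = A ℓ i k j)
    (h1 : ∀ σ : Equiv.Perm (Fin n), σ.IsSwap →
      ∀ ℓ i j k, A ℓ i j k = A (σ ℓ) (σ i) (σ j) (σ k))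
    (h2 : ∀ ℓ r : Fin n, ∑ i : Fin n, A ℓ i i r = (1 / 2) * kron ℓ r)
    (h3 : ∀ a b c p q ℓ : Fin n,
      A ℓ a q c * kron p b + A ℓ a q b * kron p c - A ℓ p b c * kron q a
        - A ℓ a p c * kron q b - A ℓ a p b * kron q c + A ℓ q b c * kron p a
        - A p a b c * kron ℓ q + A q a b c * kron ℓ p = 0) :
    ∃ t : ℝ, ∀ ℓ i j k : Fin n,
      A ℓ i j k = t * (kron i j * kron ℓ k + kron i k * kron ℓ j) / (2 * ((n : ℝ) + 1))
        + (1 - t) * (kron i ℓ * kron j k) / 2 := by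
  simpa only [Fintype.card_fin] using!
    coeff_tensor_classification_general (Nat.cast_add_one_ne_zero _) A hA h1 h2 h3
end

section
/- Let Δ = (V_0, …, V_n) be an affinely independent tuple of points of ℝⁿ and let O ∈ ℝⁿ be a point such that for each m ∈ {0, …, n}, the tuple Δ_m = (V_0, …, V_{m−1}, O, V_{m+1}, …, V_n) is also affinely independent. Then Vol(Δ)·CC(Δ) = Σ_{m=0}^{n} Vol(Δ_m)·CC(Δ_m), where Vol denotes the signed volume (1/n!)·det of the matrix of edge vectors from the first vertex, and CC denotes the circumcenter (the unique point equidistant from all n+1 vertices). -/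
/-- The signed volume of the simplex with vertices `W 0, …, W n` in `ℝⁿ`:
`(1/n!) · det(W 1 − W 0, …, W n − W 0)`. -/
noncomputable def signedVol (n : ℕ) (W : Fin (n+1) → EuclideanSpace ℝ (Fin n)) : ℝ :=
  (Matrix.of fun r c : Fin n => (W c.succ - W 0) r).det / n.factorial

/-!
In the matrix with rows `(1, W i)`, replace the `k`-th coordinate column by `|W i|² / 2`. If `c` is
equidistant from the points of `W`, the new column is `∑ j, c j • (column j)` plus a constant
column, so the determinant is multiplied by `c k`. Thus `Vol(W) · c` is a vector of determinants
whose `i`-th row depends only on `W i` and starts with `1`. By Cramer's rule, any determinant with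
rows of this shape is additive under subdivision.
-/

section Determinants

variable {R : Type*} [CommRing R]

theorem sum_mul_det_updateRow {ι : Type*} [Fintype ι] [DecidableEq ι]
    (A : Matrix ι ι R) (v : ι → R) (j : ι) :
    ∑ i, A i j * (A.updateRow i v).det = A.det * v j := by
  simpa [Matrix.mulVec, dotProduct, Matrix.cramer_transpose_apply] using
    congrFun (Matrix.mulVec_cramer A.transpose v) j

theorem sum_det_comp_update {ι E : Type*} [Fintype ι] [DecidableEq ι]
    (φ : E → ι → R) {j : ι} (hφ : ∀ p, φ p j = 1) (W : ι → E) (O : E) :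
    ∑ m, (Matrix.of (φ ∘ Function.update W m O)).det = (Matrix.of (φ ∘ W)).det := by
  have updateRow_eq (m : ι) :
      Matrix.of (φ ∘ Function.update W m O) = (Matrix.of (φ ∘ W)).updateRow m (φ O) :=
    Function.comp_update φ W m O
  simpa [updateRow_eq, hφ] using sum_mul_det_updateRow (Matrix.of (φ ∘ W)) (φ O) j

theorem det_eq_det_sub_row_zero {n : ℕ} (A : Matrix (Fin (n + 1)) (Fin (n + 1)) R)
    (hA : ∀ i, A i 0 = 1) :
    A.det = (Matrix.of fun i j : Fin n => A i.succ j.succ - A 0 j.succ).det := by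
  let B : Matrix (Fin (n + 1)) (Fin (n + 1)) R :=
    Matrix.of (Fin.cons (A 0) fun i => A i.succ - A 0)
  have det_eq : A.det = B.det :=
    Matrix.det_eq_of_forall_row_eq_smul_add_const (Fin.cons 0 1) 0 rfl
      (Fin.cases (by simp [B]) (by simp [B]))
  rw [det_eq, Matrix.det_succ_column_zero, Fin.sum_univ_succ]
  simp [B, hA, Matrix.submatrix]

end Determinants

theorem half_norm_sq_eq_of_dist_eq {E : Type*} [NormedAddCommGroup E] [InnerProductSpace ℝ E]
    {c p : E} {r : ℝ} (h : dist c p = r) :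
    ‖p‖ ^ 2 / 2 = (r ^ 2 - ‖c‖ ^ 2) / 2 + inner ℝ c p := by
  have expand := norm_sub_sq_real c p
  rw [← dist_eq_norm, h] at expand
  linarith

section Circumcenter

variable {n : ℕ}

/-- The homogeneous coordinates `(1, p₁, …, pₙ)` of a point of `ℝⁿ`, the rows of the determinant
that computes the signed volume. -/
def homogeneousCoords (p : EuclideanSpace ℝ (Fin n)) : Fin (n + 1) → ℝ :=
  Fin.cons 1 p.ofLp

/-- The homogeneous coordinates of `p` with the coordinate `p k` replaced by `|p|² / 2`, the rows
of the Cramer determinant for the `k`-th coordinate of a circumcenter. -/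
noncomputable def circumRow (k : Fin n) (p : EuclideanSpace ℝ (Fin n)) : Fin (n + 1) → ℝ :=
  Function.update (homogeneousCoords p) k.succ (‖p‖ ^ 2 / 2)

/-- The volume-weighted circumcenter of a tuple, given by Cramer determinants so that it is
defined for every tuple, including those that have no circumcenter. -/
noncomputable def weightedCircumcenter (W : Fin (n + 1) → EuclideanSpace ℝ (Fin n)) :
    EuclideanSpace ℝ (Fin n) :=
  WithLp.toLp 2 fun k => (Matrix.of (circumRow k ∘ W)).det / n.factorial

theorem signedVol_eq_det_homogeneousCoords (W : Fin (n + 1) → EuclideanSpace ℝ (Fin n)) :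
    signedVol n W = (Matrix.of (homogeneousCoords ∘ W)).det / n.factorial := by
  rw [signedVol, ← Matrix.det_transpose, det_eq_det_sub_row_zero _ fun _ => rfl]
  rfl

theorem sum_weightedCircumcenter_update (W : Fin (n + 1) → EuclideanSpace ℝ (Fin n))
    (O : EuclideanSpace ℝ (Fin n)) :
    ∑ m, weightedCircumcenter (Function.update W m O) = weightedCircumcenter W := by
  ext k
  have circumRow_zero (p : EuclideanSpace ℝ (Fin n)) : circumRow k p 0 = 1 :=
    Function.update_of_ne (Fin.succ_ne_zero k).symm _ _
  simp only [weightedCircumcenter, WithLp.ofLp_sum, Finset.sum_apply, ← Finset.sum_div,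
    sum_det_comp_update _ circumRow_zero]

theorem det_circumRow_of_equidistant {W : Fin (n + 1) → EuclideanSpace ℝ (Fin n)}
    {c : EuclideanSpace ℝ (Fin n)} {r : ℝ} (hc : ∀ a, dist c (W a) = r) (k : Fin n) :
    (Matrix.of (circumRow k ∘ W)).det = c k * (Matrix.of (homogeneousCoords ∘ W)).det := by
  let A : Matrix (Fin (n + 1)) (Fin (n + 1)) ℝ := Matrix.of (homogeneousCoords ∘ W)
  let coeff : Fin (n + 1) → ℝ := Fin.cons ((r ^ 2 - ‖c‖ ^ 2) / 2) c.ofLp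
  have half_norm_sq (a : Fin (n + 1)) : ‖W a‖ ^ 2 / 2 = ∑ j, coeff j • A a j := by
    rw [half_norm_sq_eq_of_dist_eq (hc a), Fin.sum_univ_succ]
    simp [A, coeff, homogeneousCoords, PiLp.inner_apply, mul_comm]
  have updateCol_eq : Matrix.of (circumRow k ∘ W) =
      A.updateCol k.succ fun a => ∑ j, coeff j • A a j := by
    ext a j
    simp only [half_norm_sq, Matrix.updateCol_apply, A, Matrix.of_apply, Function.comp_apply,
      circumRow, Function.update_apply]
  rw [updateCol_eq, Matrix.det_updateCol_sum]
  rfl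

theorem signedVol_smul_of_equidistant {W : Fin (n + 1) → EuclideanSpace ℝ (Fin n)}
    {c : EuclideanSpace ℝ (Fin n)} {r : ℝ} (hc : ∀ a, dist c (W a) = r) :
    signedVol n W • c = weightedCircumcenter W := by
  ext k
  simp only [weightedCircumcenter, PiLp.smul_apply, smul_eq_mul,
    signedVol_eq_det_homogeneousCoords, det_circumRow_of_equidistant hc]
  ring

theorem vol_smul_circumcenter_additive_general (Δ : Fin (n + 1) → EuclideanSpace ℝ (Fin n))
    (O cc : EuclideanSpace ℝ (Fin n)) (hcc : ∀ a, dist cc (Δ a) = dist cc (Δ 0))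
    (ccs : Fin (n + 1) → EuclideanSpace ℝ (Fin n))
    (hccs : ∀ m a,
      dist (ccs m) (Function.update Δ m O a) = dist (ccs m) (Function.update Δ m O 0)) :
    signedVol n Δ • cc = ∑ m, signedVol n (Function.update Δ m O) • ccs m := by
  simp only [signedVol_smul_of_equidistant hcc, signedVol_smul_of_equidistant (hccs _),
    sum_weightedCircumcenter_update]

end Circumcenter

/-- Archimedes Lemma for the map `Δ ↦ Vol(Δ) · CC(Δ)`: subdividing the simplex `Δ` by a point
`O` into the simplices `Δ_m` (obtained by replacing the `m`-th vertex by `O`), one has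
`Vol(Δ) · CC(Δ) = Σ_m Vol(Δ_m) · CC(Δ_m)`. -/
theorem vol_smul_circumcenter_additive (n : ℕ) (hn : 1 ≤ n)
    (Δ : Fin (n+1) → EuclideanSpace ℝ (Fin n)) (hΔ : AffineIndependent ℝ Δ)
    (O : EuclideanSpace ℝ (Fin n))
    (hm : ∀ m : Fin (n+1), AffineIndependent ℝ (Function.update Δ m O))
    (cc : EuclideanSpace ℝ (Fin n)) (hcc : ∀ a : Fin (n+1), dist cc (Δ a) = dist cc (Δ 0))
    (ccs : Fin (n+1) → EuclideanSpace ℝ (Fin n))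
    (hccs : ∀ m a : Fin (n+1),
      dist (ccs m) (Function.update Δ m O a) = dist (ccs m) (Function.update Δ m O 0)) :
    signedVol n Δ • cc = ∑ m : Fin (n+1), signedVol n (Function.update Δ m O) • ccs m :=
  vol_smul_circumcenter_additive_general Δ O cc hcc ccs hccs
end

section
/- For α ∈ (0, π/2), let T(α) be the triangle in ℝ² with vertices (−1, 0), (1, 0) and (0, tan α); it is an isosceles triangle with base of length 2 on the x-axis and base angle α, and its area equals tan α. Then the limit, as α → 0 from the right, of Area(T(α))·CC(T(α)) exists and equals (0, −1/2), where CC(T(α)) is the circumcenter of T(α). In particular, Area(T(α))·CC(T(α)) does not tend to the zero vector even though both the area of T(α) and its moment vector ∫_{T(α)} x dx tend to zero. -/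
/-!
Equidistance from two given points is a linear condition on the center. For the triangle with
vertices `(-c, 0)`, `(c, 0)` and `(0, h)` it puts the circumcenter `p` on the axis of symmetry, at a
height with `h * p 1 = (h ^ 2 - c ^ 2) / 2`. As `h → 0` the circumcenter escapes to infinity at
exactly the rate at which the area `c * h` vanishes, so their product does not tend to zero.
-/

open Filter

open scoped Topology RealInnerProductSpace

section InnerProductSpace

variable {V : Type*} [NormedAddCommGroup V] [InnerProductSpace ℝ V] {p a b : V}

theorem dist_eq_dist_iff_two_mul_inner_sub :
    dist p a = dist p b ↔ 2 * ⟪p, b - a⟫ = ‖b‖ ^ 2 - ‖a‖ ^ 2 := by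
  rw [dist_eq_norm, dist_eq_norm, ← sq_eq_sq₀ (norm_nonneg _) (norm_nonneg _),
    norm_sub_sq_real, norm_sub_sq_real, inner_sub_right]
  constructor <;> intro h <;> linarith

theorem dist_neg_eq_dist_iff_inner_eq_zero : dist p (-b) = dist p b ↔ ⟪p, b⟫ = 0 := by
  rw [dist_eq_dist_iff_two_mul_inner_sub, sub_neg_eq_add, inner_add_right, norm_neg, sub_self]
  constructor <;> intro h <;> linarith

theorem inner_eq_of_dist_neg_eq_of_dist_eq (hb : dist p (-b) = dist p b)
    (ha : dist p (-b) = dist p a) : ⟪p, a⟫ = (‖a‖ ^ 2 - ‖b‖ ^ 2) / 2 := by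
  have hpb : ⟪p, b⟫ = 0 := dist_neg_eq_dist_iff_inner_eq_zero.1 hb
  have hpa := dist_eq_dist_iff_two_mul_inner_sub.1 (hb.symm.trans ha)
  rw [inner_sub_right, hpb, sub_zero] at hpa
  linarith

end InnerProductSpace

theorem area_smul_circumcenter_eq {c h : ℝ} {p : EuclideanSpace ℝ (Fin 2)}
    (hbase : dist p !₂[-c, 0] = dist p !₂[c, 0]) (hapex : dist p !₂[-c, 0] = dist p !₂[0, h]) :
    (c * h) • p = !₂[0, c * ((h ^ 2 - c ^ 2) / 2)] := by
  have hneg : (!₂[-c, 0] : EuclideanSpace ℝ (Fin 2)) = -!₂[c, 0] := by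
    ext i; fin_cases i <;> simp
  rw [hneg] at hbase hapex
  have hp₀ : c * p 0 = 0 := by
    simpa [PiLp.inner_apply] using dist_neg_eq_dist_iff_inner_eq_zero.1 hbase
  have hp₁ : h * p 1 = (h ^ 2 - c ^ 2) / 2 := by
    simpa [PiLp.inner_apply, EuclideanSpace.real_norm_sq_eq] using
      inner_eq_of_dist_neg_eq_of_dist_eq hbase hapex
  ext i
  fin_cases i
  · change c * h * p 0 = 0
    rw [mul_right_comm, hp₀, zero_mul]
  · change c * h * p 1 = c * ((h ^ 2 - c ^ 2) / 2)
    rw [mul_assoc, hp₁]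

theorem area_smul_circumcenter_tendsto_general {ι : Type*} {l : Filter ι} {c : ℝ} {h : ι → ℝ}
    {p : ι → EuclideanSpace ℝ (Fin 2)} (hh : Tendsto h l (𝓝 0))
    (hp : ∀ᶠ i in l, dist (p i) !₂[-c, 0] = dist (p i) !₂[c, 0] ∧
      dist (p i) !₂[-c, 0] = dist (p i) !₂[0, h i]) :
    Tendsto (fun i => (c * h i) • p i) l (𝓝 !₂[0, -(c ^ 3 / 2)]) := by
  have hformula : ∀ᶠ i in l,
      (!₂[0, c * ((h i ^ 2 - c ^ 2) / 2)] : EuclideanSpace ℝ (Fin 2)) = (c * h i) • p i :=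
    hp.mono fun i hi => (area_smul_circumcenter_eq hi.1 hi.2).symm
  have hcont : Continuous fun x : ℝ =>
      (!₂[0, c * ((x ^ 2 - c ^ 2) / 2)] : EuclideanSpace ℝ (Fin 2)) := by
    fun_prop
  have hzero : c * ((0 ^ 2 - c ^ 2) / 2) = -(c ^ 3 / 2) := by ring
  rw [← hzero]
  exact ((hcont.tendsto 0).comp hh).congr' hformula

theorem tendsto_tan_zero : Tendsto Real.tan (𝓝 0) (𝓝 0) := by
  simpa using (Real.continuousAt_tan.2 (by simp) : ContinuousAt Real.tan 0).tendsto

/-- For `α ∈ (0, π/2)`, let `T(α)` be the isosceles triangle with vertices `(−1, 0)`, `(1, 0)`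
and `(0, tan α)`, of area `tan α`, and let `cc α` be its circumcenter (the point equidistant
from the three vertices). Then `Area(T(α)) · CC(T(α)) = tan α • cc α` tends to `(0, −1/2)` as
`α → 0⁺`. -/
theorem area_smul_circumcenter_tendsto (cc : ℝ → EuclideanSpace ℝ (Fin 2))
    (hcc : ∀ α ∈ Set.Ioo (0 : ℝ) (Real.pi / 2),
      dist (cc α) (!₂[(-1 : ℝ), 0] : EuclideanSpace ℝ (Fin 2)) =
          dist (cc α) (!₂[(1 : ℝ), 0] : EuclideanSpace ℝ (Fin 2)) ∧
        dist (cc α) (!₂[(-1 : ℝ), 0] : EuclideanSpace ℝ (Fin 2)) =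
          dist (cc α) (!₂[(0 : ℝ), Real.tan α] : EuclideanSpace ℝ (Fin 2)))
    (L : EuclideanSpace ℝ (Fin 2)) (hL0 : L 0 = 0) (hL1 : L 1 = -(1 / 2)) :
    Tendsto (fun α : ℝ => Real.tan α • cc α) (nhdsWithin 0 (Set.Ioi 0)) (nhds L) := by
  have hL : L = !₂[0, -(1 ^ 3 / 2)] := by ext i; fin_cases i <;> simp [hL0, hL1]
  simpa [hL] using area_smul_circumcenter_tendsto_general (c := 1)
    (tendsto_tan_zero.mono_left nhdsWithin_le_nhds)
    (eventually_of_mem (Ioo_mem_nhdsGT Real.pi_div_two_pos) hcc)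
end
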